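/- Fix 0 < α < 1. Suppose that for every β > 0 eigen-data (P(β), H_β, ν_β) for (α,β) is given, with each H_β locally ring-constant, and let μ_β be the associated Gibbs measure. Then, as β → +∞, μ_β converges weakly to the Dirac measure δ_{0^∞}. -/

import Mathlib

/-!
Write `λ = e^P`, `x = 1/λ < 1`, and give the letter `0` the depth `c = 1`, the letter `1` the depth
`c = 3`. Along the rings `[aⁿ*]` of either letter both eigen-equations are one-step recursions with
weights `wₙ = e^{-cβ(1 - 2⁻ⁿ)} xⁿ` (`wt`). Put `W_c = ∑_{n ≥ 0} wₙ` (`wtTail _ _ 0`).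

* For the eigen-measure, `ν[aⁿ*] = wₙ ν([a]ᶜ)`, and `a^∞` is not charged, so `ν([a]ᶜ) = 1/W_c`
  (`IsEigenData.ring_zero`). Also `ν[2] = x e^{-αβ}`.
* For the eigenfunction, bounded solutions of the recursion satisfy
  `wₙ H(aⁿ2^∞) = H(2^∞) ∑_{j ≥ n} wⱼ / W_c` (`solve_recursion`). Hence `H dν` gives `[aⁿ*]` the mass
  `H(2^∞) ∑_{j ≥ n} wⱼ / W_c²` (`IsEigenData.preGibbs_ring`).

Let `D = 1/(1 - x)` and `ε = 2⁻ᴺ`. From `ν[2] ≤ ν([0]ᶜ)` one gets `D ≤ 3 e^{(1+α)β}`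
(`IsEigenData.inv_le`). This makes `W₃` close to `1`, so that
`1/W₁ = ν([0]ᶜ) ≤ (1 - 1/W₃) + ν[2]` is small (`IsEigenData.four_le`). Up to finitely many
negligible terms, `W₁` then lies between `e^{-β} D` and `e^{-(1-ε)β} D`, and in units of `H(2^∞)`:

* `[0]` has mass at least `e^{-β} D² / (3 W₁²)`, which is at least of order `e^{(1-2ε)β}`
  (`IsEigenData.le_cyl_zero`);
* `[1]` has mass at most `N + e^{-3(1-ε)β} D²`, which is at most of order `e^{(2α-1+3ε)β}` or
  bounded (`IsEigenData.cyl_one_le`);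
* `[2]` and each single ring of `0` have mass at most `1`.

Since `α < 1`, choosing `5ε < 1 - α` makes the last two negligible with respect to the first, so
the Gibbs mass of the complement of every cylinder `[0ᴷ]` tends to `0`, which is weak convergence
to `δ_{0^∞}`.
-/

open MeasureTheory Filter Topology

noncomputable section

/-- The full shift space `Σ = {0,1,2}^ℕ`. -/
abbrev Sig : Type := ℕ → Fin 3

/-- The shift map `σ`. -/
def shift (x : Sig) : Sig := fun n => x (n + 1)

/-- The fixed point `0^∞`. -/
def zeroSeq : Sig := fun _ => 0

/-- The fixed point `1^∞`. -/
def oneSeq : Sig := fun _ => 1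

/-- Prepending a symbol: `a·x = (a, x₀, x₁, …)`. -/
def cons (a : Fin 3) (x : Sig) : Sig := fun n => Nat.casesOn n a x

open Classical in
/-- The metric `d(x,y) = (1/2)^(min{n : x n ≠ y n})`, with `d(x,x) = 0`. -/
def dist3 (x y : Sig) : ℝ :=
  if h : x ≠ y then (1 / 2 : ℝ) ^ Nat.find (Function.ne_iff.mp h) else 0

/-- The potential `A_α`. -/
def pot (α : ℝ) (x : Sig) : ℝ :=
  if x 0 = 0 then -dist3 x zeroSeq
  else if x 0 = 1 then -(3 * dist3 x oneSeq)
  else -α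

/-- The transfer operator `L_β` (for parameter `α`). -/
def transfer (α β : ℝ) (f : Sig → ℝ) : Sig → ℝ :=
  fun x => ∑ a : Fin 3, Real.exp (β * pot α (cons a x)) * f (cons a x)

/-- The ring `[a^n *_a] = {x : x_i = a for i < n, x_n ≠ a}`. -/
def ringSet (a : Fin 3) (n : ℕ) : Set Sig := {x | (∀ i < n, x i = a) ∧ x n ≠ a}

/-- The cylinder `[a] = {x : x₀ = a}`. -/
def cyl (a : Fin 3) : Set Sig := {x | x 0 = a}

/-- `H` is locally ring-constant: constant on `[2]` and on each ring `[0^m*₀]`, `[1^m*₁]`. -/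
def LocallyRingConstant (H : Sig → ℝ) : Prop :=
  (∀ x ∈ cyl 2, ∀ y ∈ cyl 2, H x = H y) ∧
  (∀ m : ℕ, 1 ≤ m → ∀ x ∈ ringSet 0 m, ∀ y ∈ ringSet 0 m, H x = H y) ∧
  (∀ m : ℕ, 1 ≤ m → ∀ x ∈ ringSet 1 m, ∀ y ∈ ringSet 1 m, H x = H y)

/-- An eigen-measure for `(α,β)` with exponent `P`:  a Borel probability measure `ν`
with `P > 0` and `∫ L_β f dν = e^P ∫ f dν` for every continuous `f`. -/
structure IsEigenMeasure (α β P : ℝ) (ν : Measure Sig) : Prop where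
  P_pos : 0 < P
  prob : IsProbabilityMeasure ν
  eigenMeas : ∀ f : Sig → ℝ, Continuous f →
    ∫ x, transfer α β f x ∂ν = Real.exp P * ∫ x, f x ∂ν

/-- Eigen-data `(P, H, ν)` for `(α,β)`. -/
structure IsEigenData (α β P : ℝ) (H : Sig → ℝ) (ν : Measure Sig) : Prop where
  P_pos : 0 < P
  H_cont : Continuous H
  H_pos : ∀ x, 0 < H x
  eigenFun : ∀ x, transfer α β H x = Real.exp P * H x
  prob : IsProbabilityMeasure ν
  eigenMeas : ∀ f : Sig → ℝ, Continuous f →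
    ∫ x, transfer α β f x ∂ν = Real.exp P * ∫ x, f x ∂ν

/-- The Gibbs measure `μ(B) = (∫_B H dν)/(∫ H dν)`. -/
def gibbs (H : Sig → ℝ) (ν : Measure Sig) : Measure Sig :=
  (ν.withDensity (fun x => ENNReal.ofReal (H x)) Set.univ)⁻¹ •
    ν.withDensity (fun x => ENNReal.ofReal (H x))

/-- Weak convergence (as `β → +∞`) of a family of measures to a measure `μ∞`:
convergence of integrals of every bounded continuous function. -/
def WeakLimit (μ : ℝ → Measure Sig) (μlim : Measure Sig) : Prop :=
  ∀ f : Sig → ℝ, Continuous f → (∃ C : ℝ, ∀ x, |f x| ≤ C) →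
    Tendsto (fun β => ∫ x, f x ∂(μ β)) atTop (nhds (∫ x, f x ∂μlim))

/-- `F(Z,β) = Σ_{k=0}^∞ e^{−kZ}·e^{β/2^{k+1}}`. -/
def Ffun (Z β : ℝ) : ℝ := ∑' k : ℕ, Real.exp (-(k : ℝ) * Z) * Real.exp (β / 2 ^ (k + 1))

/-- `Fpartial Z β m = F_{m-1}(Z,β) = Σ_{k=0}^{m-1} e^{−kZ}·e^{β/2^{k+1}}` (so `Fpartial Z β 0 = F_{-1} = 0`). -/
def Fpartial (Z β : ℝ) (m : ℕ) : ℝ :=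
  ∑ k ∈ Finset.range m, Real.exp (-(k : ℝ) * Z) * Real.exp (β / 2 ^ (k + 1))

/-! ### Rings and the potential -/

@[simp] lemma cons_zero (a : Fin 3) (x : Sig) : cons a x 0 = a := rfl

@[simp] lemma cons_succ (a : Fin 3) (x : Sig) (n : ℕ) : cons a x (n + 1) = x n := rfl

lemma cons_mem_ringSet (a b : Fin 3) (x : Sig) (n : ℕ) :
    cons b x ∈ ringSet a (n + 1) ↔ b = a ∧ x ∈ ringSet a n := by
  constructor
  · rintro ⟨h1, h2⟩
    exact ⟨h1 0 (by omega), fun i hi => h1 (i + 1) (by omega), h2⟩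
  · rintro ⟨rfl, h1, h2⟩
    refine ⟨fun i hi => ?_, h2⟩
    cases i with
    | zero => rfl
    | succ i => exact h1 i (by omega)

lemma isClopen_coord (n : ℕ) (s : Set (Fin 3)) : IsClopen {x : Sig | x n ∈ s} :=
  (isClopen_discrete s).preimage (continuous_apply n)

/-- The cylinder `[aⁿ]` of sequences starting with `n` letters `a`. -/
def powCyl (a : Fin 3) (n : ℕ) : Set Sig := {x | ∀ i < n, x i = a}

lemma isClopen_powCyl (a : Fin 3) (n : ℕ) : IsClopen (powCyl a n) := by
  have : powCyl a n = ⋂ i ∈ Finset.range n, {x : Sig | x i ∈ ({a} : Set (Fin 3))} := by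
    ext x; simp [powCyl]
  rw [this]
  exact isClopen_biInter_finset fun i _ => isClopen_coord i _

lemma isClopen_ringSet (a : Fin 3) (n : ℕ) : IsClopen (ringSet a n) :=
  (isClopen_powCyl a n).inter (isClopen_coord n {a}ᶜ)

lemma isClopen_cyl (a : Fin 3) : IsClopen (cyl a) := isClopen_coord 0 {a}

lemma ringSet_disjoint (a : Fin 3) : Pairwise (Function.onFun Disjoint (ringSet a)) := by
  intro m n hmn
  refine Set.disjoint_left.mpr fun x hm hn => ?_
  rcases lt_or_gt_of_ne hmn with h | h
  · exact hm.2 (hn.1 m h)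
  · exact hn.2 (hm.1 n h)

lemma exists_mem_ringSet (a : Fin 3) (x : Sig) (hx : x ≠ fun _ => a) : ∃ n, x ∈ ringSet a n := by
  classical
  have h := Function.ne_iff.mp hx
  exact ⟨Nat.find h, fun i hi => by simpa using Nat.find_min h hi, Nat.find_spec h⟩

lemma dist3_of_mem_ringSet (a : Fin 3) (n : ℕ) (x : Sig) (hx : x ∈ ringSet a n) :
    dist3 x (fun _ => a) = (1 / 2) ^ n := by
  classical
  have h : x ≠ fun _ => a := fun h => hx.2 (congrFun h n)
  rw [dist3, dif_pos h]
  congr 1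
  rw [Nat.find_eq_iff]
  exact ⟨hx.2, fun i hi => by simpa using hx.1 i hi⟩

lemma dist3_nonneg (x y : Sig) : 0 ≤ dist3 x y := by
  unfold dist3
  split_ifs <;> positivity

lemma pot_nonpos {α : ℝ} (hα : 0 < α) (x : Sig) : pot α x ≤ 0 := by
  unfold pot
  have h0 := dist3_nonneg x zeroSeq
  have h1 := dist3_nonneg x oneSeq
  split_ifs <;> linarith

/-- The letter `a` is a *well of depth `c`*: `A_α = -c·2⁻ⁿ` on `[aⁿ*]`, for `n ≥ 1`.
This holds for `a = 0` with `c = 1` and for `a = 1` with `c = 3`. -/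
def IsWell (α : ℝ) (a : Fin 3) (c : ℝ) : Prop :=
  ∀ n : ℕ, ∀ x ∈ ringSet a (n + 1), pot α x = -(c * (1 / 2) ^ (n + 1))

lemma isWell_zero (α : ℝ) : IsWell α 0 1 := by
  intro n x hx
  have h0 : x 0 = 0 := hx.1 0 (by omega)
  rw [pot, if_pos h0, one_mul, ← dist3_of_mem_ringSet 0 (n + 1) x hx]
  rfl

lemma isWell_one (α : ℝ) : IsWell α 1 3 := by
  intro n x hx
  have h0 : x 0 = 1 := hx.1 0 (by omega)
  rw [pot, if_neg (by rw [h0]; decide), if_pos h0, ← dist3_of_mem_ringSet 1 (n + 1) x hx]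
  rfl

lemma pot_cyl_two (α : ℝ) (x : Sig) (hx : x ∈ cyl 2) : pot α x = -α := by
  have h : x 0 = 2 := hx
  rw [pot, h, if_neg (by decide), if_neg (by decide)]

lemma pot_locallyRingConstant (α : ℝ) : LocallyRingConstant (pot α) := by
  refine ⟨fun x hx y hy => by rw [pot_cyl_two α x hx, pot_cyl_two α y hy], ?_, ?_⟩
  · rintro (_ | m) hm x hx y hy
    · omega
    · rw [isWell_zero α m x hx, isWell_zero α m y hy]
  · rintro (_ | m) hm x hx y hy
    · omega
    · rw [isWell_one α m x hx, isWell_one α m y hy]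

/-- The sequence `aⁿ2^∞`: a representative of the ring `[aⁿ*]`, and of `[2]` when `n = 0`. -/
def rep (a : Fin 3) (n : ℕ) : Sig := fun i => if i < n then a else 2

lemma rep_mem (a : Fin 3) (ha : a ≠ 2) (n : ℕ) : rep a n ∈ ringSet a n :=
  ⟨fun i hi => by simp [rep, hi], by simpa [rep] using ha.symm⟩

lemma cons_rep (a : Fin 3) (n : ℕ) : cons a (rep a n) = rep a (n + 1) := by
  ext i
  cases i <;> simp [rep]

/-- Away from the letter `a`, the branches of a locally ring-constant function over the rings
of `a` (and over `[2]`) do not depend on the ring. -/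
lemma LocallyRingConstant.cons_rep_eq {g : Sig → ℝ} (hg : LocallyRingConstant g) {a b : Fin 3}
    (hab : b ≠ a) (n : ℕ) : g (cons b (rep a n)) = g (cons b (rep a 0)) := by
  have key : ∀ m, b ≠ 2 → cons b (rep a m) ∈ ringSet b 1 := by
    intro m hb
    rw [cons_mem_ringSet]
    refine ⟨rfl, by simp, ?_⟩
    by_cases h : 0 < m
    · simpa [rep, h] using hab.symm
    · simpa [rep, h] using hb.symm
  fin_cases b
  · exact hg.2.1 1 le_rfl _ (key n (by decide)) _ (key 0 (by decide))
  · exact hg.2.2 1 le_rfl _ (key n (by decide)) _ (key 0 (by decide))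
  · exact hg.1 _ rfl _ rfl

/-- A locally ring-constant function is given on the rings of `a ≠ 2` by its values at `rep`. -/
lemma LocallyRingConstant.eq_rep {g : Sig → ℝ} (hg : LocallyRingConstant g) {a : Fin 3}
    (ha : a ≠ 2) (n : ℕ) (hn : 1 ≤ n) (x : Sig) (hx : x ∈ ringSet a n) : g x = g (rep a n) := by
  fin_cases a
  · exact hg.2.1 n hn _ hx _ (rep_mem 0 ha n)
  · exact hg.2.2 n hn _ hx _ (rep_mem 1 ha n)
  · exact absurd rfl ha

/-! ### The eigen-measure -/

lemma IsEigenData.real_eq {α β P : ℝ} {H : Sig → ℝ} {ν : Measure Sig}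
    (h : IsEigenData α β P H ν) (s : Set Sig) (hs : IsClopen s) :
    ∫ x, transfer α β (s.indicator 1) x ∂ν = Real.exp P * ν.real s := by
  rw [h.eigenMeas _ (hs.continuous_indicator continuous_one),
    integral_indicator_one hs.isOpen.measurableSet]

lemma IsEigenData.ring_succ {α β P : ℝ} {H : Sig → ℝ} {ν : Measure Sig}
    (h : IsEigenData α β P H ν) {a : Fin 3} {c : ℝ} (ha : IsWell α a c) (n : ℕ) :
    Real.exp P * ν.real (ringSet a (n + 1)) =
      Real.exp (-(c * β * (1 / 2) ^ (n + 1))) * ν.real (ringSet a n) := by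
  rw [← h.real_eq _ (isClopen_ringSet a (n + 1)),
    ← integral_indicator_one (isClopen_ringSet a n).isOpen.measurableSet, ← integral_const_mul]
  congr 1
  ext x
  unfold transfer
  rw [Finset.sum_eq_single a]
  · by_cases hx : x ∈ ringSet a n
    · have h1 : cons a x ∈ ringSet a (n + 1) := (cons_mem_ringSet a a x n).2 ⟨rfl, hx⟩
      rw [Set.indicator_of_mem hx, Set.indicator_of_mem h1, ha n _ h1]
      simp only [Pi.one_apply, mul_one]
      congr 1; ring
    · have h1 : cons a x ∉ ringSet a (n + 1) := fun h => hx ((cons_mem_ringSet a a x n).1 h).2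
      rw [Set.indicator_of_notMem hx, Set.indicator_of_notMem h1]; simp
  · intro b _ hb
    have h1 : cons b x ∉ ringSet a (n + 1) := fun h => hb ((cons_mem_ringSet a b x n).1 h).1
    rw [Set.indicator_of_notMem h1, mul_zero]
  · simp

lemma IsEigenData.cyl_two {α β P : ℝ} {H : Sig → ℝ} {ν : Measure Sig}
    (h : IsEigenData α β P H ν) :
    Real.exp P * ν.real (cyl 2) = Real.exp (-(α * β)) := by
  have := h.prob
  rw [← h.real_eq _ (isClopen_cyl 2)]
  have : transfer α β ((cyl 2).indicator 1) = fun _ => Real.exp (-(α * β)) := by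
    ext x
    unfold transfer
    rw [Finset.sum_eq_single 2]
    · have h2 : cons 2 x ∈ cyl 2 := rfl
      rw [Set.indicator_of_mem h2, pot_cyl_two α _ h2]
      simp only [Pi.one_apply, mul_one]
      congr 1; ring
    · intro b _ hb
      have h2 : cons b x ∉ cyl 2 := hb
      rw [Set.indicator_of_notMem h2, mul_zero]
    · simp
  rw [this]; simp

lemma exp_pot_le_one {α β : ℝ} (hα : 0 < α) (hβ : 0 < β) (x : Sig) :
    Real.exp (β * pot α x) ≤ 1 :=
  Real.exp_le_one_iff.2 (mul_nonpos_of_nonneg_of_nonpos hβ.le (pot_nonpos hα x))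

lemma IsEigenData.exp_le_three {α β P : ℝ} {H : Sig → ℝ} {ν : Measure Sig}
    (h : IsEigenData α β P H ν) (hα : 0 < α) (hβ : 0 < β) : Real.exp P ≤ 3 := by
  have := h.prob
  have h1 := h.eigenMeas (fun _ => 1) continuous_const
  simp only [integral_const, probReal_univ, smul_eq_mul, mul_one] at h1
  rw [← h1]
  refine (le_abs_self _).trans ?_
  have h2 := norm_integral_le_of_norm_le_const (μ := ν) (C := 3)
    (f := transfer α β (fun _ => 1)) (ae_of_all _ fun x => ?_)
  · simpa using h2
  · have e : ∀ b, Real.exp (β * pot α (cons b x)) ≤ 1 := fun b => exp_pot_le_one hα hβ _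
    rw [Real.norm_of_nonneg (by unfold transfer; positivity)]
    unfold transfer
    simp only [mul_one, Fin.sum_univ_three]
    linarith [e 0, e 1, e 2]

lemma IsEigenData.powCyl_le {α β P : ℝ} {H : Sig → ℝ} {ν : Measure Sig}
    (h : IsEigenData α β P H ν) (hα : 0 < α) (hβ : 0 < β) (a : Fin 3) (n : ℕ) :
    ν.real (powCyl a n) ≤ (Real.exp P)⁻¹ ^ n := by
  have := h.prob
  induction n with
  | zero => simp
  | succ n ih =>
    have hle : Real.exp P * ν.real (powCyl a (n + 1)) ≤ ν.real (powCyl a n) := by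
      rw [← h.real_eq _ (isClopen_powCyl a (n + 1)),
        ← integral_indicator_one (isClopen_powCyl a n).isOpen.measurableSet]
      refine integral_mono_of_nonneg (ae_of_all _ fun x => ?_) ?_ (ae_of_all _ fun x => ?_)
      · exact Finset.sum_nonneg fun b _ => mul_nonneg (Real.exp_pos _).le
          (Set.indicator_nonneg (by simp) _)
      · exact (integrable_const (1 : ℝ)).indicator (isClopen_powCyl a n).isOpen.measurableSet
      · unfold transfer
        rw [Finset.sum_eq_single a]
        · by_cases hx : x ∈ powCyl a n
          · rw [Set.indicator_of_mem hx]
            refine mul_le_one₀ (exp_pot_le_one hα hβ _) (Set.indicator_nonneg (by simp) _) ?_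
            exact Set.indicator_le_self' (by simp) _
          · have h1 : cons a x ∉ powCyl a (n + 1) := fun h =>
              hx fun i hi => h (i + 1) (by omega)
            rw [Set.indicator_of_notMem hx, Set.indicator_of_notMem h1]; simp
        · intro b _ hb
          have h1 : cons b x ∉ powCyl a (n + 1) := fun h => hb (h 0 (by omega))
          rw [Set.indicator_of_notMem h1, mul_zero]
        · simp
    have hpos := Real.exp_pos P
    calc ν.real (powCyl a (n + 1)) = (Real.exp P)⁻¹ * (Real.exp P * ν.real (powCyl a (n + 1))) := by
          field_simp
      _ ≤ (Real.exp P)⁻¹ * (Real.exp P)⁻¹ ^ n := by gcongr; exact hle.trans ih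
      _ = _ := by ring

/-- The eigen-measure does not charge the fixed point `a^∞`, because `λ > 1`. -/
lemma IsEigenData.null {α β P : ℝ} {H : Sig → ℝ} {ν : Measure Sig}
    (h : IsEigenData α β P H ν) (hα : 0 < α) (hβ : 0 < β) (a : Fin 3) :
    ν {fun _ => a} = 0 := by
  have := h.prob
  rw [← measureReal_eq_zero_iff]
  refine le_antisymm ?_ measureReal_nonneg
  refine ge_of_tendsto' (tendsto_pow_atTop_nhds_zero_of_lt_one
    (inv_nonneg.2 (Real.exp_pos P).le) (inv_lt_one_of_one_lt₀ (Real.one_lt_exp_iff.2 h.P_pos)))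
    fun n => (measureReal_mono ?_).trans (h.powCyl_le hα hβ a n)
  rintro x rfl i _
  rfl

/-- If `a^∞` is a null point, the rings of `a` carry the whole mass of `m`. -/
lemma hasSum_ring (m : Measure Sig) [IsFiniteMeasure m] (a : Fin 3) (h0 : m {fun _ => a} = 0) :
    HasSum (fun n => m.real (ringSet a n)) (m.real Set.univ) := by
  have h1 := hasSum_integral_iUnion (μ := m) (f := fun _ => (1 : ℝ)) (s := ringSet a)
    (fun n => (isClopen_ringSet a n).isOpen.measurableSet) (ringSet_disjoint a)
    (integrable_const _).integrableOn
  simp only [integral_const, smul_eq_mul, mul_one, measureReal_restrict_apply_univ] at h1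
  suffices e : m.real Set.univ = m.real (⋃ n, ringSet a n) by rwa [e]
  refine le_antisymm ?_ (measureReal_mono (Set.subset_univ _))
  have : (Set.univ : Set Sig) ⊆ (⋃ n, ringSet a n) ∪ {fun _ => a} := by
    intro x _
    by_cases hx : x = fun _ => a
    · exact Or.inr hx
    · exact Or.inl (Set.mem_iUnion.2 (exists_mem_ringSet a x hx))
  refine (measureReal_mono this).trans ((measureReal_union_le _ _).trans ?_)
  simp [Measure.real, h0]

/-! ### Weights of the rings -/

/-- The weight of the ring `[aⁿ*]` of a well of depth `c`, where `k = cβ` and `x = e^{-P}`;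
the exponent is the Birkhoff sum `-c(2⁻ⁿ + ⋯ + 2⁻¹) = -c(1 - 2⁻ⁿ)` times `β`. -/
def wt (k x : ℝ) (n : ℕ) : ℝ := Real.exp (-(k * (1 - (1 / 2) ^ n))) * x ^ n

/-- The tail `∑_{j ≥ n}` of the weights; `wtTail k x 0` is the full sum. -/
def wtTail (k x : ℝ) (n : ℕ) : ℝ := ∑' j, wt k x (j + n)

lemma wt_zero (k x : ℝ) : wt k x 0 = 1 := by simp [wt]

lemma wt_succ (k x : ℝ) (n : ℕ) :
    wt k x (n + 1) = x * Real.exp (-(k * (1 / 2) ^ (n + 1))) * wt k x n := by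
  have : -(k * (1 - (1 / 2 : ℝ) ^ (n + 1))) =
      -(k * (1 / 2) ^ (n + 1)) + -(k * (1 - (1 / 2) ^ n)) := by ring
  rw [wt, wt, this, Real.exp_add]; ring

lemma wt_nonneg {k x : ℝ} (hx : 0 < x) (n : ℕ) : 0 ≤ wt k x n := by
  unfold wt; positivity

lemma half_pow_le_of_le {m n : ℕ} (h : m ≤ n) : (1 / 2 : ℝ) ^ n ≤ (1 / 2) ^ m :=
  pow_le_pow_of_le_one (by norm_num) (by norm_num) h

lemma wt_le_of_le {k x : ℝ} (hk : 0 ≤ k) (hx : 0 < x) {m n : ℕ} (h : m ≤ n) :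
    wt k x n ≤ Real.exp (-(k * (1 - (1 / 2) ^ m))) * x ^ n := by
  unfold wt
  have := half_pow_le_of_le h
  gcongr

lemma wt_le {k x : ℝ} (hk : 0 ≤ k) (hx : 0 < x) (n : ℕ) : wt k x n ≤ x ^ n := by
  simpa using wt_le_of_le hk hx (Nat.zero_le n)

lemma le_wt {k x : ℝ} (hk : 0 ≤ k) (hx : 0 < x) (n : ℕ) : Real.exp (-k) * x ^ n ≤ wt k x n := by
  unfold wt
  have : (0 : ℝ) ≤ (1 / 2) ^ n := by positivity
  gcongr
  nlinarith

lemma summable_wt {k x : ℝ} (hk : 0 ≤ k) (hx : 0 < x) (hx1 : x < 1) : Summable (wt k x) :=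
  Summable.of_nonneg_of_le (wt_nonneg hx) (wt_le hk hx) (summable_geometric_of_lt_one hx.le hx1)

lemma hasSum_wtTail {k x : ℝ} (hk : 0 ≤ k) (hx : 0 < x) (hx1 : x < 1) (n : ℕ) :
    HasSum (fun j => wt k x (j + n)) (wtTail k x n) :=
  ((summable_nat_add_iff n).2 (summable_wt hk hx hx1)).hasSum

lemma hasSum_geom_tail {x : ℝ} (hx : 0 < x) (hx1 : x < 1) (C : ℝ) (n : ℕ) :
    HasSum (fun j => C * x ^ (j + n)) (C * (1 - x)⁻¹ * x ^ n) := by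
  have := (hasSum_geometric_of_lt_one hx.le hx1).mul_left (C * x ^ n)
  rw [show C * (1 - x)⁻¹ * x ^ n = C * x ^ n * (1 - x)⁻¹ by ring]
  have e : (fun j => C * x ^ (j + n)) = fun j => C * x ^ n * x ^ j := by
    ext j; rw [pow_add]; ring
  rwa [e]

lemma le_wtTail {k x : ℝ} (hk : 0 ≤ k) (hx : 0 < x) (hx1 : x < 1) (n : ℕ) :
    Real.exp (-k) * (1 - x)⁻¹ * x ^ n ≤ wtTail k x n :=
  hasSum_le (fun j => le_wt hk hx (j + n)) (hasSum_geom_tail hx hx1 _ n) (hasSum_wtTail hk hx hx1 n)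

lemma wtTail_le_of_le {k x : ℝ} (hk : 0 ≤ k) (hx : 0 < x) (hx1 : x < 1) {N n : ℕ} (h : N ≤ n) :
    wtTail k x n ≤ Real.exp (-(k * (1 - (1 / 2) ^ N))) * (1 - x)⁻¹ * x ^ n :=
  hasSum_le (fun j => wt_le_of_le hk hx (by omega)) (hasSum_wtTail hk hx hx1 n)
    (hasSum_geom_tail hx hx1 _ n)

lemma wtTail_nonneg {k x : ℝ} (hx : 0 < x) (n : ℕ) : 0 ≤ wtTail k x n :=
  tsum_nonneg fun _ => wt_nonneg hx _

lemma wtTail_le_zero {k x : ℝ} (hk : 0 ≤ k) (hx : 0 < x) (hx1 : x < 1) (n : ℕ) :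
    wtTail k x n ≤ wtTail k x 0 := by
  have h := (summable_wt hk hx hx1).sum_add_tsum_nat_add n
  have h1 : 0 ≤ ∑ i ∈ Finset.range n, wt k x i := Finset.sum_nonneg fun i _ => wt_nonneg hx i
  unfold wtTail
  simp only [add_zero]
  linarith

lemma one_le_wtTail_zero {k x : ℝ} (hk : 0 ≤ k) (hx : 0 < x) (hx1 : x < 1) :
    1 ≤ wtTail k x 0 := by
  have := le_hasSum (hasSum_wtTail hk hx hx1 0) 0 (fun j _ => wt_nonneg hx (j + 0))
  simpa [wt_zero] using this

lemma hasSum_ite_lt (C : ℝ) (N : ℕ) : HasSum (fun n => if n < N then C else 0) (N * C) := by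
  have h : HasSum (fun n => if n < N then C else 0)
      (∑ n ∈ Finset.range N, if n < N then C else 0) :=
    hasSum_sum_of_ne_finset_zero fun n hn => if_neg (by simpa using hn)
  have e : (∑ n ∈ Finset.range N, if n < N then C else 0) = N * C := by
    rw [Finset.sum_congr rfl fun n hn => if_pos (Finset.mem_range.1 hn)]
    simp
  rwa [e] at h

/-- The total weight is at most `1`, plus `N` ring weights bounded crudely, plus a geometric
series whose prefactor `e^{-k(1 - 2⁻ᴺ)}` is close to the true `e^{-k}`. -/
lemma wtTail_zero_le {k x : ℝ} (hk : 0 ≤ k) (hx : 0 < x) (hx1 : x < 1) (N : ℕ) :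
    wtTail k x 0 ≤ 1 + N * Real.exp (-(k / 2)) +
      Real.exp (-(k * (1 - (1 / 2) ^ N))) * (1 - x)⁻¹ := by
  have h1 := ((hasSum_ite_eq (0 : ℕ) (1 : ℝ)).add (hasSum_ite_lt (Real.exp (-(k / 2))) N)).add
    (hasSum_geom_tail hx hx1 (Real.exp (-(k * (1 - (1 / 2) ^ N)))) 0)
  refine (hasSum_le (fun j => ?_) (hasSum_wtTail hk hx hx1 0) h1).trans (by simp)
  have e1 : 0 ≤ Real.exp (-(k * (1 - (1 / 2) ^ N))) * x ^ (j + 0) := by positivity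
  have e2 : (0 : ℝ) ≤ if j < N then Real.exp (-(k / 2)) else 0 := by split_ifs <;> positivity
  simp only [add_zero] at e1 ⊢
  rcases Nat.eq_zero_or_pos j with rfl | hj
  · rw [wt_zero, if_pos rfl]; linarith
  · rw [if_neg hj.ne', zero_add]
    by_cases hjN : j < N
    · rw [if_pos hjN]
      have h2 := wt_le_of_le (m := 1) hk hx hj
      have h3 : x ^ j ≤ 1 := pow_le_one₀ hx.le hx1.le
      have h4 : -(k * (1 - (1 / 2 : ℝ) ^ 1)) = -(k / 2) := by ring
      rw [h4] at h2
      have h5 := mul_le_of_le_one_right (Real.exp_pos (-(k / 2))).le h3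
      linarith
    · rw [if_neg hjN, zero_add]
      exact wt_le_of_le hk hx (by omega)

/-- The bounded solution of the eigenfunction recursion along the rings of one well. -/
lemma solve_recursion {k x : ℝ} (hk : 0 ≤ k) (hx : 0 < x) (hx1 : x < 1) (h : ℕ → ℝ) (B C : ℝ)
    (hB : ∀ n, |h n| ≤ B)
    (hrec : ∀ n, h n = x * (Real.exp (-(k * (1 / 2) ^ (n + 1))) * h (n + 1) + C)) (n : ℕ) :
    wt k x n * h n = h 0 / wtTail k x 0 * wtTail k x n := by
  have hstep : ∀ n, wt k x n * h n - wt k x (n + 1) * h (n + 1) = x * C * wt k x n := by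
    intro n
    rw [wt_succ]
    linear_combination wt k x n * hrec n
  have hlim : Tendsto (fun n => wt k x n * h n) atTop (𝓝 0) := by
    have h1 : Tendsto (fun n => x ^ n * B) atTop (𝓝 0) := by
      simpa using (tendsto_pow_atTop_nhds_zero_of_lt_one hx.le hx1).mul_const B
    refine squeeze_zero_norm (fun n => ?_) h1
    rw [norm_mul, Real.norm_of_nonneg (wt_nonneg hx n)]
    exact mul_le_mul (wt_le hk hx n) (hB n) (abs_nonneg _) (by positivity)
  have hsol : ∀ n, wt k x n * h n = x * C * wtTail k x n := by
    intro n
    have h1 := ((hasSum_wtTail hk hx hx1 n).mul_left (x * C)).tendsto_sum_nat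
    have h2 : ∀ M, ∑ j ∈ Finset.range M, x * C * wt k x (j + n) =
        wt k x n * h n - wt k x (M + n) * h (M + n) := by
      intro M
      have := Finset.sum_range_sub' (fun j => wt k x (j + n) * h (j + n)) M
      simp only [zero_add] at this
      rw [← this]
      refine Finset.sum_congr rfl fun j _ => ?_
      rw [← hstep]
      congr 3 <;> ring
    simp only [h2] at h1
    have h3 : Tendsto (fun M => wt k x n * h n - wt k x (M + n) * h (M + n)) atTop
        (𝓝 (wt k x n * h n - 0)) :=
      tendsto_const_nhds.sub (hlim.comp (tendsto_add_atTop_nat n))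
    rw [sub_zero] at h3
    exact tendsto_nhds_unique h3 h1
  have h0 := hsol 0
  have hW : wtTail k x 0 ≠ 0 := (one_le_wtTail_zero hk hx hx1).trans_lt' one_pos |>.ne'
  rw [wt_zero, one_mul] at h0
  rw [hsol, h0]
  field_simp

/-! ### The unnormalised Gibbs measure on the rings of a well -/

section Well

variable {α β P : ℝ} {H : Sig → ℝ} {ν : Measure Sig}

/-- The unnormalised Gibbs measure `H dν`. -/
def preGibbs (H : Sig → ℝ) (ν : Measure Sig) : Measure Sig :=
  ν.withDensity (fun x => ENNReal.ofReal (H x))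

lemma IsEigenData.x_lt_one (h : IsEigenData α β P H ν) : Real.exp (-P) < 1 :=
  Real.exp_lt_one_iff.2 (by linarith [h.P_pos])

lemma IsEigenData.isFiniteMeasure (h : IsEigenData α β P H ν) :
    IsFiniteMeasure (preGibbs H ν) := by
  have := h.prob
  have hi : Integrable H ν :=
    h.H_cont.integrable_of_hasCompactSupport (HasCompactSupport.of_compactSpace H)
  exact isFiniteMeasure_withDensity_ofReal hi.2

lemma IsEigenData.preGibbs_null (h : IsEigenData α β P H ν) (hα : 0 < α) (hβ : 0 < β)
    (a : Fin 3) : preGibbs H ν {fun _ => a} = 0 :=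
  withDensity_absolutelyContinuous _ _ (h.null hα hβ a)

lemma preGibbs_real_of_const {s : Set Sig} (hs : MeasurableSet s) (y : ℝ)
    (hy : ∀ x ∈ s, H x = y) (hy0 : 0 ≤ y) : (preGibbs H ν).real s = y * ν.real s := by
  rw [Measure.real, preGibbs, withDensity_apply _ hs,
    setLIntegral_congr_fun hs (g := fun _ => ENNReal.ofReal y) (fun x hx => by simp [hy x hx])]
  simp [Measure.real, ENNReal.toReal_mul, ENNReal.toReal_ofReal hy0]

lemma IsEigenData.ring_eq (h : IsEigenData α β P H ν) {a : Fin 3} {c : ℝ} (ha : IsWell α a c)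
    (n : ℕ) :
    ν.real (ringSet a n) = wt (c * β) (Real.exp (-P)) n * ν.real (ringSet a 0) := by
  induction n with
  | zero => rw [wt_zero, one_mul]
  | succ n ih =>
    have h1 := h.ring_succ ha n
    rw [ih] at h1
    rw [wt_succ, mul_assoc, mul_assoc, ← h1, ← mul_assoc, ← Real.exp_add]
    simp

/-- `ν` gives the complement of `[a]` the reciprocal of the total weight of the well. -/
lemma IsEigenData.ring_zero (h : IsEigenData α β P H ν) (hα : 0 < α) (hβ : 0 < β)
    {a : Fin 3} {c : ℝ} (hc : 0 ≤ c) (ha : IsWell α a c) :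
    ν.real (ringSet a 0) = (wtTail (c * β) (Real.exp (-P)) 0)⁻¹ := by
  have := h.prob
  have hk : 0 ≤ c * β := by positivity
  have hsum := hasSum_ring ν a (h.null hα hβ a)
  rw [probReal_univ] at hsum
  have h2 := (hasSum_wtTail hk (Real.exp_pos _) h.x_lt_one 0).mul_right (ν.real (ringSet a 0))
  simp only [add_zero, ← h.ring_eq ha] at h2
  exact eq_inv_of_mul_eq_one_right (h2.unique hsum)

/-- Masses of the rings under `H dν`, in units of the value of `H` on `[2]`. -/
lemma IsEigenData.preGibbs_ring (h : IsEigenData α β P H ν) (hα : 0 < α) (hβ : 0 < β)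
    (hRC : LocallyRingConstant H) {a : Fin 3} (ha2 : a ≠ 2) {c : ℝ} (hc : 0 ≤ c)
    (ha : IsWell α a c) (n : ℕ) (hn : 1 ≤ n) :
    (preGibbs H ν).real (ringSet a n) = H (rep 0 0) *
      (wtTail (c * β) (Real.exp (-P)) n / wtTail (c * β) (Real.exp (-P)) 0 ^ 2) := by
  have hk : 0 ≤ c * β := by positivity
  have hrep : rep a 0 = rep 0 0 := by ext i; simp [rep]
  obtain ⟨B, hB⟩ := isCompact_univ.exists_bound_of_continuousOn h.H_cont.continuousOn
  -- The two branches other than `a` contribute the same amount over every ring of `a`.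
  have hrec : ∀ n, H (rep a n) = Real.exp (-P) *
      (Real.exp (-(c * β * (1 / 2) ^ (n + 1))) * H (rep a (n + 1)) +
        ∑ b ∈ Finset.univ.erase a,
          Real.exp (β * pot α (cons b (rep a 0))) * H (cons b (rep a 0))) := by
    intro n
    have h1 := h.eigenFun (rep a n)
    unfold transfer at h1
    rw [← Finset.add_sum_erase _ _ (Finset.mem_univ a), cons_rep,
      ha n _ (rep_mem a ha2 (n + 1))] at h1
    have h2 : ∀ b ∈ Finset.univ.erase a,
        Real.exp (β * pot α (cons b (rep a n))) * H (cons b (rep a n)) =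
        Real.exp (β * pot α (cons b (rep a 0))) * H (cons b (rep a 0)) := by
      intro b hb
      have hb' := Finset.ne_of_mem_erase hb
      rw [(pot_locallyRingConstant α).cons_rep_eq hb', hRC.cons_rep_eq hb']
    rw [Finset.sum_congr rfl h2] at h1
    have h3 : β * -(c * (1 / 2) ^ (n + 1)) = -(c * β * (1 / 2) ^ (n + 1)) := by ring
    rw [h3] at h1
    rw [h1, ← mul_assoc, ← Real.exp_add]
    simp
  have hs := solve_recursion hk (Real.exp_pos (-P)) h.x_lt_one (fun n => H (rep a n)) B _
    (fun n => by simpa using hB _ (Set.mem_univ _)) hrec n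
  rw [preGibbs_real_of_const (isClopen_ringSet a n).isOpen.measurableSet (H (rep a n))
    (fun x hx => hRC.eq_rep ha2 n hn x hx) (h.H_pos _).le, h.ring_eq ha, h.ring_zero hα hβ hc ha]
  simp only [hrep] at hs
  linear_combination (wtTail (c * β) (Real.exp (-P)) 0)⁻¹ * hs

lemma IsEigenData.hasSum_cyl (h : IsEigenData α β P H ν) (hα : 0 < α) (hβ : 0 < β)
    (a : Fin 3) :
    HasSum (fun n => (preGibbs H ν).real (ringSet a (n + 1))) ((preGibbs H ν).real (cyl a)) := by
  have := h.isFiniteMeasure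
  have h1 := hasSum_ring (preGibbs H ν) a (h.preGibbs_null hα hβ a)
  rw [← hasSum_nat_add_iff' 1] at h1
  have e : ringSet a 0 = (cyl a)ᶜ := by
    ext x; simp [ringSet, cyl]
  have h2 := measureReal_add_measureReal_compl (μ := preGibbs H ν)
    (isClopen_cyl a).isOpen.measurableSet
  rw [Finset.sum_range_one, e] at h1
  rwa [eq_sub_of_add_eq h2]

end Well

/-! ### Comparison of the two wells -/

section Estimate

variable {α β P : ℝ} {H : Sig → ℝ} {ν : Measure Sig}

lemma IsEigenData.third_le (h : IsEigenData α β P H ν) (hα : 0 < α) (hβ : 0 < β) :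
    1 / 3 ≤ Real.exp (-P) := by
  rw [Real.exp_neg, ← one_div]
  exact one_div_le_one_div_of_le (Real.exp_pos P) (h.exp_le_three hα hβ)

lemma IsEigenData.cyl_two_eq (h : IsEigenData α β P H ν) :
    ν.real (cyl 2) = Real.exp (-P) * Real.exp (-(α * β)) := by
  rw [← h.cyl_two, ← mul_assoc, ← Real.exp_add]; simp

/-- Lower bound on the pressure: `1/(1 - e^{-P})` is at most of order `e^{(1+α)β}`. It comes from
`ν[2] ≤ ν([0]ᶜ)`, that is, `e^{-P-αβ} ≤ 1/W`, and `W ≥ e^{-β}/(1 - e^{-P})`, where `W` is the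
total weight of the well at `0`. -/
lemma IsEigenData.inv_le (h : IsEigenData α β P H ν) (hα : 0 < α) (hβ : 0 < β) :
    (1 - Real.exp (-P))⁻¹ ≤ 3 * Real.exp ((1 + α) * β) := by
  have := h.prob
  have hx3 := h.third_le hα hβ
  have hx1 := h.x_lt_one
  have hk : 0 ≤ 1 * β := by linarith
  have hW := one_le_wtTail_zero hk (Real.exp_pos (-P)) hx1
  have hWl := le_wtTail hk (Real.exp_pos (-P)) hx1 0
  have hr := h.ring_zero hα hβ zero_le_one (isWell_zero α)
  have hsub : ν.real (cyl 2) ≤ ν.real (ringSet 0 0) := by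
    refine measureReal_mono fun x hx => ⟨by simp, ?_⟩
    rw [show x 0 = 2 from hx]; decide
  rw [hr, h.cyl_two_eq] at hsub
  set W := wtTail (1 * β) (Real.exp (-P)) 0
  have h1 : W * (Real.exp (-P) * Real.exp (-(α * β))) ≤ 1 := by
    calc _ ≤ W * W⁻¹ := by gcongr
      _ = 1 := mul_inv_cancel₀ (by positivity)
  have h2 : W * Real.exp (-(α * β)) ≤ 3 := by
    have : 0 ≤ W * Real.exp (-(α * β)) := by positivity
    nlinarith
  rw [one_mul, pow_zero, mul_one] at hWl
  calc (1 - Real.exp (-P))⁻¹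
      = (Real.exp (-β) * (1 - Real.exp (-P))⁻¹) * Real.exp (-(α * β)) * Real.exp ((1 + α) * β) := by
        rw [mul_right_comm (Real.exp (-β)), mul_right_comm, ← Real.exp_add, ← Real.exp_add,
          show -β + -(α * β) + (1 + α) * β = 0 by ring]
        simp
    _ ≤ W * Real.exp (-(α * β)) * Real.exp ((1 + α) * β) := by gcongr
    _ ≤ _ := by gcongr

/-- The total weight of the well at `0` is at least `4` once `β` is large. -/
lemma IsEigenData.four_le (h : IsEigenData α β P H ν) (hα : 0 < α) (hβ : 0 < β) (N : ℕ)
    (hN : N * Real.exp (-(3 * β / 2)) + 3 * Real.exp ((-2 + α + 3 * (1 / 2) ^ N) * β) +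
      Real.exp (-(α * β)) ≤ 1 / 4) :
    4 ≤ wtTail (1 * β) (Real.exp (-P)) 0 := by
  have := h.prob
  have hx1 := h.x_lt_one
  have hk0 : 0 ≤ 1 * β := by linarith
  have hk1 : 0 ≤ 3 * β := by linarith
  have hW0 := one_le_wtTail_zero hk0 (Real.exp_pos (-P)) hx1
  have hW1 := one_le_wtTail_zero hk1 (Real.exp_pos (-P)) hx1
  have hW1u := wtTail_zero_le hk1 (Real.exp_pos (-P)) hx1 N
  have hr0 := h.ring_zero hα hβ zero_le_one (isWell_zero α)
  have hr1 := h.ring_zero hα hβ (by norm_num) (isWell_one α)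
  have hsub : ν.real (ringSet 0 0) ≤ (1 - ν.real (ringSet 1 0)) + ν.real (cyl 2) := by
    rw [← probReal_compl_eq_one_sub (isClopen_ringSet 1 0).isOpen.measurableSet]
    refine (measureReal_mono ?_).trans (measureReal_union_le _ _)
    intro x hx
    have hx0 : x 0 ≠ 0 := hx.2
    simp only [Set.mem_union, Set.mem_compl_iff, ringSet, cyl, Set.mem_ofPred_eq]
    have : x 0 = 1 ∨ x 0 = 2 := by omega
    rcases this with h1 | h2
    · exact Or.inl fun h => h.2 h1
    · exact Or.inr h2
  rw [hr0, hr1, h.cyl_two_eq] at hsub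
  set W0 := wtTail (1 * β) (Real.exp (-P)) 0
  set W1 := wtTail (3 * β) (Real.exp (-P)) 0
  have h1 : 1 - W1⁻¹ ≤ W1 - 1 := by
    have : W1⁻¹ * W1 = 1 := inv_mul_cancel₀ (by positivity)
    nlinarith [inv_pos.2 (lt_of_lt_of_le one_pos hW1), sq_nonneg (W1 - 1)]
  have h2 : Real.exp (-(3 * β * (1 - (1 / 2) ^ N))) * (1 - Real.exp (-P))⁻¹ ≤
      3 * Real.exp ((-2 + α + 3 * (1 / 2) ^ N) * β) := by
    calc _ ≤ Real.exp (-(3 * β * (1 - (1 / 2) ^ N))) * (3 * Real.exp ((1 + α) * β)) := by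
          gcongr; exact h.inv_le hα hβ
      _ = _ := by
          rw [mul_left_comm, ← Real.exp_add]
          congr 2; ring
  have h3 : Real.exp (-P) * Real.exp (-(α * β)) ≤ Real.exp (-(α * β)) :=
    mul_le_of_le_one_left (Real.exp_pos _).le hx1.le
  have h4 : W0⁻¹ ≤ 1 / 4 := by linarith
  rw [inv_le_comm₀ (by positivity) (by positivity)] at h4
  norm_num at h4
  exact h4

/-- Mass of the well at `0`: at least of order `e^{(1-2ε)β}`, with `ε = 2⁻ᴺ`. -/
lemma IsEigenData.le_cyl_zero (h : IsEigenData α β P H ν) (hα : 0 < α) (hβ : 0 < β)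
    (hRC : LocallyRingConstant H) (N : ℕ) (hN1 : N * Real.exp (-(β / 2)) ≤ 1)
    (hW4 : 4 ≤ wtTail (1 * β) (Real.exp (-P)) 0) :
    H (rep 0 0) * Real.exp ((1 - 2 * (1 / 2) ^ N) * β) ≤ 12 * (preGibbs H ν).real (cyl 0) := by
  have hx1 := h.x_lt_one
  have hx := Real.exp_pos (-P)
  have hx3 := h.third_le hα hβ
  have hk : 0 ≤ 1 * β := by linarith
  have hWu := wtTail_zero_le hk hx hx1 N
  have hcyl := h.hasSum_cyl hα hβ 0
  have hH := h.H_pos (rep 0 0)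
  have hring := h.preGibbs_ring hα hβ hRC (by decide) zero_le_one (isWell_zero α)
  have htail := fun n => le_wtTail hk hx hx1 n
  set W := wtTail (1 * β) (Real.exp (-P)) 0
  set x := Real.exp (-P)
  set D := (1 - x)⁻¹ with hD
  have hDpos : 0 < D := inv_pos.2 (by linarith)
  set T := Real.exp (-(1 * β * (1 - (1 / 2) ^ N))) * D with hT
  rw [one_mul β] at hWu htail
  -- `W ≤ 2 + T` together with `W ≥ 4` gives `W ≤ 2T`.
  have hWT : W ≤ 2 * T := by linarith
  have hgeo := hasSum_geom_tail hx hx1 (H (rep 0 0) * (Real.exp (-β) * D / W ^ 2)) 1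
  have hle := hasSum_le (fun n => ?_) hgeo hcyl
  · rw [← hD, pow_one] at hle
    have hE : Real.exp ((1 - 2 * (1 / 2) ^ N) * β) * T ^ 2 = Real.exp (-β) * D ^ 2 := by
      rw [hT, mul_pow, ← Real.exp_nat_mul, ← mul_assoc, ← Real.exp_add]
      congr 2; push_cast; ring
    have hWpos : 0 < W := by linarith
    have h1 : Real.exp ((1 - 2 * (1 / 2) ^ N) * β) ≤ 4 * (Real.exp (-β) * D ^ 2 / W ^ 2) := by
      rw [← mul_div_assoc, le_div_iff₀ (by positivity), ← hE]
      have : W ^ 2 ≤ 4 * T ^ 2 := by nlinarith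
      nlinarith [Real.exp_pos ((1 - 2 * (1 / 2) ^ N) * β)]
    have h2 : Real.exp (-β) * D ^ 2 / W ^ 2 ≤ 3 * (Real.exp (-β) * D / W ^ 2 * D * x) := by
      have : 0 ≤ Real.exp (-β) * D ^ 2 / W ^ 2 := by positivity
      calc _ ≤ 3 * x * (Real.exp (-β) * D ^ 2 / W ^ 2) := by nlinarith
        _ = _ := by ring
    nlinarith
  · rw [hring (n + 1) (by omega), mul_assoc]
    gcongr
    rw [div_mul_eq_mul_div, one_mul β]
    gcongr
    exact htail (n + 1)

lemma IsEigenData.ring_le (h : IsEigenData α β P H ν) (hα : 0 < α) (hβ : 0 < β)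
    (hRC : LocallyRingConstant H) {a : Fin 3} (ha2 : a ≠ 2) {c : ℝ} (hc : 0 ≤ c)
    (ha : IsWell α a c) (n : ℕ) (hn : 1 ≤ n) :
    (preGibbs H ν).real (ringSet a n) ≤ H (rep 0 0) := by
  have hk : 0 ≤ c * β := by positivity
  have hx := Real.exp_pos (-P)
  have hW := one_le_wtTail_zero hk hx h.x_lt_one
  have hl := wtTail_le_zero hk hx h.x_lt_one n
  rw [h.preGibbs_ring hα hβ hRC ha2 hc ha n hn]
  refine mul_le_of_le_one_right (h.H_pos _).le ?_
  rw [div_le_one (by positivity)]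
  nlinarith

/-- Mass of the well at `1`: at most of order `e^{(2α-1+3ε)β}`, with `ε = 2⁻ᴺ`. -/
lemma IsEigenData.cyl_one_le (h : IsEigenData α β P H ν) (hα : 0 < α) (hβ : 0 < β)
    (hRC : LocallyRingConstant H) (N : ℕ) :
    (preGibbs H ν).real (cyl 1) ≤
      H (rep 0 0) * (N + 9 * Real.exp ((-1 + 2 * α + 3 * (1 / 2) ^ N) * β)) := by
  have hx1 := h.x_lt_one
  have hx := Real.exp_pos (-P)
  have hk : 0 ≤ 3 * β := by linarith
  have hH := h.H_pos (rep 0 0)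
  have hW := one_le_wtTail_zero hk hx hx1
  have hinv := h.inv_le hα hβ
  set x := Real.exp (-P)
  set D := (1 - x)⁻¹ with hD
  have hDpos : 0 < D := inv_pos.2 (by linarith)
  set E := Real.exp (-(3 * β * (1 - (1 / 2) ^ N)))
  have hs := (hasSum_ite_lt (H (rep 0 0)) N).add
    (hasSum_geom_tail hx hx1 (H (rep 0 0) * (E * D)) 1)
  refine (hasSum_le (fun n => ?_) (h.hasSum_cyl hα hβ 1) hs).trans ?_
  · by_cases hn : n < N
    · rw [if_pos hn]
      have := h.ring_le hα hβ hRC (a := 1) (by decide) (by norm_num) (isWell_one α) (n + 1)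
        (by omega)
      have : 0 ≤ H (rep 0 0) * (E * D) * x ^ (n + 1) := by positivity
      linarith
    · rw [if_neg hn, zero_add, h.preGibbs_ring hα hβ hRC (by decide) (by norm_num) (isWell_one α)
        (n + 1) (by omega), mul_assoc]
      gcongr
      have := wtTail_le_of_le hk hx hx1 (N := N) (n := n + 1) (by omega)
      refine (div_le_self (wtTail_nonneg hx _) ?_).trans this
      nlinarith
  · rw [← hD, pow_one]
    have h1 : E * D ^ 2 ≤ 9 * Real.exp ((-1 + 2 * α + 3 * (1 / 2) ^ N) * β) := by
      calc E * D ^ 2 ≤ E * (3 * Real.exp ((1 + α) * β)) ^ 2 := by gcongr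
        _ = _ := by
          rw [mul_pow, mul_left_comm, ← Real.exp_nat_mul, ← Real.exp_add]
          congr 2
          · norm_num
          · push_cast; ring
    have h2 : E * D * D * x ≤ E * D ^ 2 := by
      calc E * D * D * x ≤ E * D * D * 1 := by gcongr
        _ = _ := by ring
    nlinarith

/-- Explicit bound on the Gibbs mass outside `[0ᴷ]`, for `β` large in terms of `N`. -/
lemma IsEigenData.compl_powCyl_le (h : IsEigenData α β P H ν) (hα : 0 < α) (hβ : 0 < β)
    (hRC : LocallyRingConstant H) (N : ℕ) (hN1 : N * Real.exp (-(β / 2)) ≤ 1)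
    (hN : N * Real.exp (-(3 * β / 2)) + 3 * Real.exp ((-2 + α + 3 * (1 / 2) ^ N) * β) +
      Real.exp (-(α * β)) ≤ 1 / 4) (K : ℕ) :
    (preGibbs H ν).real (powCyl 0 K)ᶜ ≤
      (12 * (K + N + 1) * Real.exp (-((1 - 2 * (1 / 2) ^ N) * β)) +
        108 * Real.exp (-((2 - 2 * α - 5 * (1 / 2) ^ N) * β))) * (preGibbs H ν).real Set.univ := by
  have := h.prob
  have := h.isFiniteMeasure
  have h0 := h.le_cyl_zero hα hβ hRC N hN1 (h.four_le hα hβ N hN)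
  have h1 := h.cyl_one_le hα hβ hRC N
  have hH := h.H_pos (rep 0 0)
  have h2 : (preGibbs H ν).real (cyl 2) ≤ H (rep 0 0) := by
    rw [preGibbs_real_of_const (isClopen_cyl 2).isOpen.measurableSet (H (rep 0 0))
      (fun x hx => hRC.1 _ hx _ rfl) hH.le]
    exact mul_le_of_le_one_right hH.le measureReal_le_one
  have h3 : (preGibbs H ν).real (⋃ n ∈ Finset.range K, ringSet 0 (n + 1)) ≤ K * H (rep 0 0) := by
    refine (measureReal_biUnion_finset_le _ _).trans ?_
    refine (Finset.sum_le_card_nsmul _ _ (H (rep 0 0)) fun n _ =>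
      h.ring_le hα hβ hRC (by decide) zero_le_one (isWell_zero α) (n + 1) (by omega)).trans ?_
    simp
  have hcov : (powCyl 0 K)ᶜ ⊆
      ((⋃ n ∈ Finset.range K, ringSet 0 (n + 1)) ∪ cyl 1) ∪ cyl 2 := by
    intro x hx
    have hne : x ≠ fun _ => 0 := by rintro rfl; exact hx fun _ _ => rfl
    obtain ⟨n, hn⟩ := exists_mem_ringSet 0 x hne
    have hnK : n < K := by
      by_contra hc
      exact hx fun i hi => hn.1 i (by omega)
    rcases n with _ | n
    · have hx0 : x 0 ≠ 0 := hn.2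
      have : x 0 = 1 ∨ x 0 = 2 := by omega
      rcases this with h1 | h2
      · exact Or.inl (Or.inr h1)
      · exact Or.inr h2
    · refine Or.inl (Or.inl ?_)
      simp only [Set.mem_iUnion, Finset.mem_range]
      exact ⟨n, by omega, hn⟩
  have h4 : (preGibbs H ν).real (powCyl 0 K)ᶜ ≤
      H (rep 0 0) * (K + N + 1 + 9 * Real.exp ((-1 + 2 * α + 3 * (1 / 2) ^ N) * β)) := by
    have e1 := measureReal_mono (μ := preGibbs H ν) hcov
    have e2 := measureReal_union_le (μ := preGibbs H ν)
      ((⋃ n ∈ Finset.range K, ringSet 0 (n + 1)) ∪ cyl 1) (cyl 2)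
    have e3 := measureReal_union_le (μ := preGibbs H ν)
      (⋃ n ∈ Finset.range K, ringSet 0 (n + 1)) (cyl 1)
    linarith
  have h5 : (preGibbs H ν).real (cyl 0) ≤ (preGibbs H ν).real Set.univ :=
    measureReal_mono (Set.subset_univ _)
  set G := Real.exp (-((1 - 2 * (1 / 2) ^ N) * β)) with hG
  have h6 : H (rep 0 0) ≤ 12 * G * (preGibbs H ν).real Set.univ := by
    calc H (rep 0 0) = G * (H (rep 0 0) * Real.exp ((1 - 2 * (1 / 2) ^ N) * β)) := by
          rw [mul_left_comm, hG, ← Real.exp_add]; simp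
      _ ≤ G * (12 * (preGibbs H ν).real Set.univ) := by
          exact mul_le_mul_of_nonneg_left (by linarith) (Real.exp_pos _).le
      _ = _ := by ring
  have h7 : G * Real.exp ((-1 + 2 * α + 3 * (1 / 2) ^ N) * β) =
      Real.exp (-((2 - 2 * α - 5 * (1 / 2) ^ N) * β)) := by
    rw [hG, ← Real.exp_add]; congr 1; ring
  rw [← h7]
  refine h4.trans ((mul_le_mul_of_nonneg_right h6 (by positivity)).trans (le_of_eq ?_))
  ring

end Estimate

/-! ### The weak limit -/

lemma IsEigenData.isProbabilityMeasure_gibbs {α β P : ℝ} {H : Sig → ℝ} {ν : Measure Sig}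
    (h : IsEigenData α β P H ν) : IsProbabilityMeasure (gibbs H ν) := by
  have := h.prob
  have := h.isFiniteMeasure
  have hne : preGibbs H ν Set.univ ≠ 0 := by
    intro h0
    rw [preGibbs, withDensity_apply _ MeasurableSet.univ, Measure.restrict_univ,
      lintegral_eq_zero_iff h.H_cont.measurable.ennreal_ofReal] at h0
    obtain ⟨x, hx⟩ := h0.exists
    simp only [Pi.zero_apply, ENNReal.ofReal_eq_zero] at hx
    exact absurd (h.H_pos x) (not_lt.2 hx)
  constructor
  change (preGibbs H ν Set.univ)⁻¹ * preGibbs H ν Set.univ = 1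
  exact ENNReal.inv_mul_cancel hne (measure_ne_top _ _)

lemma gibbs_real_le {H : Sig → ℝ} {ν : Measure Sig} (s : Set Sig) {q : ℝ} (hq : 0 ≤ q)
    (h : (preGibbs H ν).real s ≤ q * (preGibbs H ν).real Set.univ) :
    (gibbs H ν).real s ≤ q := by
  have e : (gibbs H ν).real s = ((preGibbs H ν).real Set.univ)⁻¹ * (preGibbs H ν).real s := by
    change ((preGibbs H ν Set.univ)⁻¹ * preGibbs H ν s).toReal = _
    rw [ENNReal.toReal_mul, ENNReal.toReal_inv]; rfl
  rw [e, inv_mul_eq_div]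
  exact div_le_of_le_mul₀ measureReal_nonneg hq h

lemma tendsto_exp_neg_mul {b : ℝ} (hb : 0 < b) :
    Tendsto (fun β : ℝ => Real.exp (-(b * β))) atTop (𝓝 0) :=
  Real.tendsto_exp_neg_atTop_nhds_zero.comp (tendsto_id.const_mul_atTop hb)

lemma tendsto_compl_powCyl (α : ℝ) (hα0 : 0 < α) (hα1 : α < 1)
    (P : ℝ → ℝ) (H : ℝ → Sig → ℝ) (ν : ℝ → Measure Sig)
    (hE : ∀ β > (0 : ℝ), IsEigenData α β (P β) (H β) (ν β))
    (hRC : ∀ β > (0 : ℝ), LocallyRingConstant (H β)) (K : ℕ) :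
    Tendsto (fun β => (gibbs (H β) (ν β)).real (powCyl 0 K)ᶜ) atTop (𝓝 0) := by
  -- The exponent `-(2 - 2α - 5·2⁻ᴺ)` of the final bound has to be negative.
  obtain ⟨N, hN⟩ := exists_pow_lt_of_lt_one (show (0 : ℝ) < (1 - α) / 5 by linarith)
    (show (1 / 2 : ℝ) < 1 by norm_num)
  have hε : (0 : ℝ) < (1 / 2) ^ N := by positivity
  have l1 : Tendsto (fun β : ℝ => N * Real.exp (-(β / 2))) atTop (𝓝 0) := by
    have := (tendsto_exp_neg_mul (b := 1 / 2) (by norm_num)).const_mul (N : ℝ)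
    simp only [mul_zero] at this
    refine this.congr fun β => ?_
    congr 3; ring
  have l2 : Tendsto (fun β : ℝ => N * Real.exp (-(3 * β / 2)) +
      3 * Real.exp ((-2 + α + 3 * (1 / 2) ^ N) * β) + Real.exp (-(α * β))) atTop (𝓝 0) := by
    have := (((tendsto_exp_neg_mul (b := 3 / 2) (by norm_num)).const_mul (N : ℝ)).add
      ((tendsto_exp_neg_mul (b := 2 - α - 3 * (1 / 2) ^ N) (by linarith)).const_mul 3)).add
      (tendsto_exp_neg_mul hα0)
    simp only [mul_zero, add_zero] at this
    refine this.congr fun β => ?_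
    congr 4 <;> ring
  have l3 : Tendsto (fun β : ℝ =>
      12 * (K + N + 1) * Real.exp (-((1 - 2 * (1 / 2) ^ N) * β)) +
        108 * Real.exp (-((2 - 2 * α - 5 * (1 / 2) ^ N) * β))) atTop (𝓝 0) := by
    have := ((tendsto_exp_neg_mul (b := 1 - 2 * (1 / 2) ^ N) (by linarith)).const_mul
      (12 * (K + N + 1) : ℝ)).add
      ((tendsto_exp_neg_mul (b := 2 - 2 * α - 5 * (1 / 2) ^ N) (by linarith)).const_mul 108)
    simpa only [mul_zero, add_zero] using this
  refine squeeze_zero' (Eventually.of_forall fun β => measureReal_nonneg) ?_ l3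
  filter_upwards [eventually_gt_atTop (0 : ℝ), l1.eventually_le_const zero_lt_one,
    l2.eventually_le_const (show (0 : ℝ) < 1 / 4 by norm_num)] with β hβ h1 h2
  exact gibbs_real_le _ (by positivity)
    ((hE β hβ).compl_powCyl_le hα0 hβ (hRC β hβ) N h1 h2 K)

/-- Continuity at `0^∞`, expressed by the neighbourhood basis of cylinders `[0ᴷ]`. -/
lemma exists_powCyl_subset {f : Sig → ℝ} (hf : Continuous f) {δ : ℝ} (hδ : 0 < δ) :
    ∃ K, ∀ x ∈ powCyl 0 K, |f x - f zeroSeq| ≤ δ := by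
  have h1 : {x | |f x - f zeroSeq| < δ} ∈ 𝓝 zeroSeq :=
    (hf.sub continuous_const).abs.continuousAt.eventually_lt continuousAt_const (by simpa using hδ)
  rw [nhds_pi, Filter.mem_pi] at h1
  obtain ⟨I, hI, t, ht, hsub⟩ := h1
  obtain ⟨K, hK⟩ := hI.bddAbove
  refine ⟨K + 1, fun x hx => le_of_lt (hsub fun i hi => ?_)⟩
  have : x i = zeroSeq i := hx i (Nat.lt_succ_of_le (hK hi))
  rw [this]
  exact mem_of_mem_nhds (ht i)

/-- For `0 < α < 1`, the Gibbs measures `μ_β` converge weakly to `δ_{0^∞}`. -/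
theorem gibbs_weak_limit_alpha_lt_one (α : ℝ) (hα0 : 0 < α) (hα1 : α < 1)
    (P : ℝ → ℝ) (H : ℝ → Sig → ℝ) (ν : ℝ → Measure Sig)
    (hE : ∀ β > (0 : ℝ), IsEigenData α β (P β) (H β) (ν β))
    (hRC : ∀ β > (0 : ℝ), LocallyRingConstant (H β)) :
    WeakLimit (fun β => gibbs (H β) (ν β)) (Measure.dirac zeroSeq) := by
  intro f hf ⟨C, hC⟩
  rw [integral_dirac, Metric.tendsto_nhds]
  intro δ hδ
  obtain ⟨K, hK⟩ := exists_powCyl_subset hf (half_pos hδ)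
  have hlim := (tendsto_compl_powCyl α hα0 hα1 P H ν hE hRC K).const_mul (2 * C)
  rw [mul_zero] at hlim
  filter_upwards [eventually_gt_atTop (0 : ℝ), hlim.eventually_lt_const (half_pos hδ)] with β hβ h1
  have := (hE β hβ).isProbabilityMeasure_gibbs
  have hm : MeasurableSet (powCyl 0 K)ᶜ := (isClopen_powCyl 0 K).compl.isOpen.measurableSet
  have hfi : Integrable f (gibbs (H β) (ν β)) :=
    hf.integrable_of_hasCompactSupport (HasCompactSupport.of_compactSpace f)
  have hC0 : 0 ≤ C := (abs_nonneg _).trans (hC zeroSeq)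
  have e : ∫ x, f x ∂(gibbs (H β) (ν β)) - f zeroSeq =
      ∫ x, (f x - f zeroSeq) ∂(gibbs (H β) (ν β)) := by
    rw [integral_sub hfi (integrable_const _)]; simp
  have hi : Integrable ((powCyl 0 K)ᶜ.indicator fun _ => 2 * C) (gibbs (H β) (ν β)) :=
    (integrable_const _).indicator hm
  have hle := norm_integral_le_of_norm_le (μ := gibbs (H β) (ν β))
    (f := fun x => f x - f zeroSeq)
    (g := fun x => δ / 2 + (powCyl 0 K)ᶜ.indicator (fun _ => 2 * C) x)
    ((integrable_const _).add hi) (ae_of_all _ fun x => ?_)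
  · rw [integral_add (integrable_const _) hi, integral_indicator_const _ hm] at hle
    simp only [integral_const, probReal_univ, smul_eq_mul, one_mul] at hle
    rw [Real.dist_eq, e, ← Real.norm_eq_abs]
    linarith
  · rw [Real.norm_eq_abs]
    by_cases hx : x ∈ powCyl 0 K
    · rw [Set.indicator_of_notMem (by simpa using hx), add_zero]
      exact hK x hx
    · rw [Set.indicator_of_mem hx]
      have h2 := abs_sub (f x) (f zeroSeq)
      linarith [hC x, hC zeroSeq]

end
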